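/- Let α > 0. Let R: ℝ² → ℂ be a continuous integrable function whose two-dimensional Fourier transform R̂₂(z, w) := ∫_ℝ ∫_ℝ e^{−izu} e^{−iwv} R(u, v) du dv is integrable on ℝ², for which the inversion formula R(u, v) = (1/(2π)²) ∫_ℝ ∫_ℝ e^{izu} e^{iwv} R̂₂(z, w) dz dw holds for all (u, v), and which satisfies ∫_ℝ ∫_ℝ |R̂₂(z, w)| |z|^α |w|^α dz dw < ∞. Let ψ: ℝ → ℂ be integrable with ψ̂(0) = 0, and suppose ψ̂ is Hölder (Lipschitz of order α): there is L > 0 such that |ψ̂(y) − ψ̂(y′)| ≤ L |y − y′|^α for all y, y′ ∈ ℝ. For j ∈ ℕ₀, k ∈ ℤ set ψ_{jk}(x) := 2^{j/2} ψ(2^j x − k). Then for every j ∈ ℕ₀ and k ∈ ℤ, | ∫_ℝ ∫_ℝ R(u, v) conj(ψ_{jk}(u)) ψ_{jk}(v) du dv | ≤ (L² / ((2π)² · 2^{j(1+2α)})) ∫_ℝ ∫_ℝ |R̂₂(z, w)| |z|^α |w|^α dz dw; in particular this bound is uniform in k and decays geometrically in j. -/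

import Mathlib

open MeasureTheory Complex

/-- The Fourier transform `ĝ(y) = ∫_ℝ e^{-iyx} g(x) dx`. -/
noncomputable def ft (g : ℝ → ℂ) (y : ℝ) : ℂ :=
  ∫ x : ℝ, Complex.exp (-(Complex.I * y * x)) * g x

/-- The two-dimensional Fourier transform
`R̂₂(z,w) = ∫∫ e^{−izu} e^{−iwv} R(u,v) du dv`. -/
noncomputable def ft2 (R : ℝ → ℝ → ℂ) (z w : ℝ) : ℂ :=
  ∫ u : ℝ, ∫ v : ℝ,
    Complex.exp (-(Complex.I * z * u)) * Complex.exp (-(Complex.I * w * v)) * R u v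

/-- The dilated-translated wavelet `ψ_{jk}(x) = 2^{j/2} ψ(2^j x − k)`. -/
noncomputable def wav (ψ : ℝ → ℂ) (j : ℕ) (k : ℤ) (x : ℝ) : ℂ :=
  (((2 : ℝ) ^ ((j : ℝ) / 2) : ℝ) : ℂ) * ψ ((2 : ℝ) ^ j * x - k)

lemma norm_exp_I_mul_mul (a b : ℝ) : ‖Complex.exp (Complex.I * a * b)‖ = 1 := by
  have : Complex.I * a * b = ((a * b : ℝ) : ℂ) * Complex.I := by push_cast; ring
  rw [this, Complex.norm_exp_ofReal_mul_I]

lemma wav_integrable (ψ : ℝ → ℂ) (hψ : Integrable ψ) (j : ℕ) (k : ℤ) :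
    Integrable (wav ψ j k) := by
  unfold wav
  refine Integrable.const_mul ?_ _
  have h1 : Integrable (fun x : ℝ => ψ (x - k)) := hψ.comp_sub_right (k : ℝ)
  exact h1.comp_mul_left' (R := (2 : ℝ) ^ j) (by positivity)

lemma ft_wav (ψ : ℝ → ℂ) (j : ℕ) (k : ℤ) (y : ℝ) :
    ‖ft (wav ψ j k) y‖ = (2 : ℝ) ^ (-((j : ℝ) / 2)) * ‖ft ψ (y / 2 ^ j)‖ := by
  have hb : (0 : ℝ) < 2 ^ j := by positivity
  set b : ℝ := 2 ^ j with hbdef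
  set a : ℝ := (2 : ℝ) ^ ((j : ℝ) / 2) with ha
  have ha0 : 0 < a := by positivity
  have hbc : (b : ℂ) ≠ 0 := by exact_mod_cast hb.ne'
  let h : ℝ → ℂ := fun t => (Complex.exp (Complex.I * ((-(y / b) : ℝ) : ℂ) * ((k : ℝ) : ℂ)) * a) *
    (Complex.exp (-(Complex.I * ((y / b : ℝ) : ℂ) * t)) * ψ t)
  have e1 : ft (wav ψ j k) y = ∫ x : ℝ, (fun s => h (s - (k : ℝ))) (b * x) := by
    unfold ft wav
    refine integral_congr_ae (Filter.Eventually.of_forall fun x => ?_)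
    simp only [h]
    have : Complex.exp (-(Complex.I * y * x)) =
        Complex.exp (Complex.I * ((-(y / b) : ℝ) : ℂ) * ((k : ℝ) : ℂ)) *
        Complex.exp (-(Complex.I * ((y / b : ℝ) : ℂ) * ((b * x - k : ℝ) : ℂ))) := by
      rw [← Complex.exp_add]
      congr 1
      push_cast
      field_simp
      ring
    rw [this]
    ring
  have e2 : ft (wav ψ j k) y = b⁻¹ • ((Complex.exp (Complex.I * ((-(y / b) : ℝ) : ℂ) * ((k : ℝ) : ℂ)) * a) * ft ψ (y / b)) := by
    rw [e1, Measure.integral_comp_mul_left (fun s => h (s - (k : ℝ))) b, integral_sub_right_eq_self h, abs_of_pos (inv_pos.2 hb)]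
    simp only [h]
    rw [integral_const_mul]
    rfl
  rw [e2, norm_smul, norm_mul, norm_mul, norm_exp_I_mul_mul, Complex.norm_real, Real.norm_eq_abs,
    Real.norm_eq_abs, abs_of_pos ha0, abs_of_pos (inv_pos.2 hb), Real.rpow_neg (by norm_num), ← ha]
  have hab : b = a * a := by
    rw [ha, ← Real.rpow_add (by norm_num), add_halves, Real.rpow_natCast]
  rw [hab]
  field_simp

lemma ft_wav_le (α : ℝ) (ψ : ℝ → ℂ) (hψ0 : ft ψ 0 = 0) (L : ℝ)
    (hHolder : ∀ y y' : ℝ, ‖ft ψ y - ft ψ y'‖ ≤ L * |y - y'| ^ α) (j : ℕ) (k : ℤ) (y : ℝ) :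
    ‖ft (wav ψ j k) y‖ ≤ L * (2 : ℝ) ^ (-((j : ℝ) * (1 / 2 + α))) * |y| ^ α := by
  rw [ft_wav]
  have h := hHolder (y / 2 ^ j) 0
  rw [hψ0, sub_zero, sub_zero, abs_div, abs_of_pos (by positivity : (0 : ℝ) < 2 ^ j),
    Real.div_rpow (abs_nonneg _) (by positivity), ← Real.rpow_natCast,
    ← Real.rpow_mul (by norm_num), div_eq_mul_inv (|y| ^ α), ← Real.rpow_neg (by norm_num)] at h
  have e : (2 : ℝ) ^ (-((j : ℝ) * (1 / 2 + α))) =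
      (2 : ℝ) ^ (-((j : ℝ) / 2)) * (2 : ℝ) ^ (-((j : ℝ) * α)) := by
    rw [← Real.rpow_add (by norm_num)]
    congr 1
    ring
  rw [e]
  rw [← Real.rpow_natCast]
  calc _ ≤ (2 : ℝ) ^ (-((j : ℝ) / 2)) * (L * (|y| ^ α * (2 : ℝ) ^ (-((j : ℝ) * α)))) := by gcongr
    _ = _ := by ring

lemma parseval_aux (R G : ℝ → ℝ → ℂ) (c : ℂ) (φ : ℝ → ℂ) (hφ : Integrable φ)
    (hG : Integrable (fun p : ℝ × ℝ => G p.1 p.2))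
    (hRinv : ∀ u v : ℝ, R u v = c * ∫ z : ℝ, ∫ w : ℝ,
          Complex.exp (Complex.I * z * u) * Complex.exp (Complex.I * w * v) * G z w) :
    ∫ u : ℝ, ∫ v : ℝ, R u v * (starRingEnd ℂ) (φ u) * φ v =
      c * ∫ p : ℝ × ℝ, G p.1 p.2 * ((starRingEnd ℂ) (ft φ p.1) * ft φ (-p.2)) := by
  let E : (ℝ × ℝ) → (ℝ × ℝ) → ℂ := fun q p =>
    Complex.exp (Complex.I * p.1 * q.1) * Complex.exp (Complex.I * p.2 * q.2)
  have hEn : ∀ q p, ‖E q p‖ = 1 := fun q p => by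
    simp only [E, norm_mul, norm_exp_I_mul_mul, mul_one]
  have hEc : Continuous (Function.uncurry E) := by
    simp only [E, Function.uncurry_def]
    fun_prop
  have hφc : Integrable (fun u => (starRingEnd ℂ) (φ u)) :=
    (LinearIsometryEquiv.integrable_comp_iff Complex.conjLIE).2 hφ
  let F : (ℝ × ℝ) × (ℝ × ℝ) → ℂ := fun x =>
    E x.1 x.2 * (((starRingEnd ℂ) (φ x.1.1) * φ x.1.2) * G x.2.1 x.2.2)
  have hF : Integrable F := by
    have h0 := (hφc.mul_prod hφ).mul_prod hG
    refine h0.bdd_mul (c := 1) hEc.aestronglyMeasurable ?_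
    exact Filter.Eventually.of_forall fun x => (hEn x.1 x.2).le
  have hF' : Integrable F ((volume : Measure (ℝ × ℝ)).prod (volume : Measure (ℝ × ℝ))) := hF
  have hR : ∀ u v : ℝ, R u v * (starRingEnd ℂ) (φ u) * φ v = c * ∫ p, F ((u, v), p) := by
    intro u v
    have hi : Integrable (fun p : ℝ × ℝ => E (u, v) p * G p.1 p.2)
        ((volume : Measure ℝ).prod (volume : Measure ℝ)) := by
      refine hG.bdd_mul (c := 1) ?_ (Filter.Eventually.of_forall fun x => (hEn _ x).le)
      exact (hEc.comp (by fun_prop : Continuous fun p : ℝ × ℝ => ((u, v), p))).aestronglyMeasurable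
    have h2 : ∫ z : ℝ, ∫ w : ℝ,
          Complex.exp (Complex.I * z * u) * Complex.exp (Complex.I * w * v) * G z w
          = ∫ p : ℝ × ℝ, E (u, v) p * G p.1 p.2 := (integral_prod _ hi).symm
    rw [hRinv, h2, mul_assoc, mul_assoc, ← integral_mul_const]
    congr 1
    refine integral_congr_ae (Filter.Eventually.of_forall fun x => ?_)
    simp only [F]
    ring
  have h3 : Integrable (fun q : ℝ × ℝ => c * ∫ p, F (q, p))
      ((volume : Measure ℝ).prod (volume : Measure ℝ)) := hF'.integral_prod_left.const_mul c
  have h4 := integral_prod _ h3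
  simp only [hR]
  rw [← h4, integral_const_mul]
  congr 1
  have h5 := integral_integral_swap (f := fun q p => F (q, p)) hF'
  refine h5.trans ?_
  refine integral_congr_ae (Filter.Eventually.of_forall fun p => ?_)
  have h6 : ∀ q : ℝ × ℝ, F (q, p) = G p.1 p.2 *
      ((fun u : ℝ => Complex.exp (Complex.I * p.1 * u) * (starRingEnd ℂ) (φ u)) q.1 *
       (fun v : ℝ => Complex.exp (Complex.I * p.2 * v) * φ v) q.2) := by
    intro q
    simp only [F, E]
    ring
  simp only [h6]
  rw [integral_const_mul]
  congr 1
  refine (integral_prod_mul (μ := (volume : Measure ℝ)) (ν := (volume : Measure ℝ))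
    (fun u : ℝ => Complex.exp (Complex.I * p.1 * u) * (starRingEnd ℂ) (φ u))
    (fun v : ℝ => Complex.exp (Complex.I * p.2 * v) * φ v)).trans ?_
  congr 1
  · unfold ft
    rw [← integral_conj]
    refine integral_congr_ae (Filter.Eventually.of_forall fun x => ?_)
    simp only [map_mul, ← Complex.exp_conj, map_neg, Complex.conj_I, Complex.conj_ofReal]
    congr 2
    ring
  · unfold ft
    refine integral_congr_ae (Filter.Eventually.of_forall fun x => ?_)
    simp only
    congr 2
    push_cast
    ring

/-- Nonstationary uniform-in-`k`, geometrically decaying in `j` bound: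
`|∫∫ R(u,v) conj(ψ_{jk}(u)) ψ_{jk}(v) du dv|
  ≤ (L²/((2π)² 2^{j(1+2α)})) ∫∫ |R̂₂(z,w)| |z|^α |w|^α dz dw`. -/
theorem stmt_12 (α : ℝ) (hα : 0 < α)
    (R : ℝ → ℝ → ℂ)
    (hRcont : Continuous (Function.uncurry R))
    (hRint : Integrable (Function.uncurry R))
    (hRhatint : Integrable (fun p : ℝ × ℝ => ft2 R p.1 p.2))
    (hRinv : ∀ u v : ℝ, R u v =
      ((1 / (2 * Real.pi)) ^ 2 : ℝ) *
        ∫ z : ℝ, ∫ w : ℝ,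
          Complex.exp (Complex.I * z * u) * Complex.exp (Complex.I * w * v) * ft2 R z w)
    (hRhatα : Integrable (fun p : ℝ × ℝ => ‖ft2 R p.1 p.2‖ * |p.1| ^ α * |p.2| ^ α))
    (ψ : ℝ → ℂ) (hψint : Integrable ψ) (hψ0 : ft ψ 0 = 0)
    (L : ℝ) (hL : 0 < L)
    (hHolder : ∀ y y' : ℝ, ‖ft ψ y - ft ψ y'‖ ≤ L * |y - y'| ^ α) :
    ∀ (j : ℕ) (k : ℤ),
      ‖∫ u : ℝ, ∫ v : ℝ,
          R u v * (starRingEnd ℂ) (wav ψ j k u) * wav ψ j k v‖ ≤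
        (L ^ 2 / ((2 * Real.pi) ^ 2 * (2 : ℝ) ^ ((j : ℝ) * (1 + 2 * α)))) *
          ∫ z : ℝ, ∫ w : ℝ, ‖ft2 R z w‖ * |z| ^ α * |w| ^ α := by
  intro j k
  rw [parseval_aux R (ft2 R) _ (wav ψ j k) (wav_integrable ψ hψint j k) hRhatint hRinv, norm_mul]
  have hα' : Integrable (fun p : ℝ × ℝ => ‖ft2 R p.1 p.2‖ * |p.1| ^ α * |p.2| ^ α)
      ((volume : Measure ℝ).prod (volume : Measure ℝ)) := hRhatα
  have e1 : ∫ z : ℝ, ∫ w : ℝ, ‖ft2 R z w‖ * |z| ^ α * |w| ^ α =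
      ∫ p : ℝ × ℝ, ‖ft2 R p.1 p.2‖ * |p.1| ^ α * |p.2| ^ α := (integral_prod _ hα').symm
  rw [e1]
  set d : ℝ := (2 : ℝ) ^ (-((j : ℝ) * (1 / 2 + α))) with hd
  have hd0 : 0 < d := by positivity
  have hdd : (2 : ℝ) ^ ((j : ℝ) * (1 + 2 * α)) = (d * d)⁻¹ := by
    rw [hd, ← Real.rpow_add (by norm_num), ← Real.rpow_neg (by norm_num)]
    congr 1
    ring
  have hb : ‖∫ p : ℝ × ℝ, ft2 R p.1 p.2 *
      ((starRingEnd ℂ) (ft (wav ψ j k) p.1) * ft (wav ψ j k) (-p.2))‖ ≤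
      ∫ p : ℝ × ℝ, (L * d) ^ 2 * (‖ft2 R p.1 p.2‖ * |p.1| ^ α * |p.2| ^ α) := by
    refine norm_integral_le_of_norm_le (hRhatα.const_mul _)
      (Filter.Eventually.of_forall fun p => ?_)
    have h1 := ft_wav_le α ψ hψ0 L hHolder j k p.1
    have h2 := ft_wav_le α ψ hψ0 L hHolder j k (-p.2)
    rw [← hd] at h1 h2
    rw [abs_neg] at h2
    rw [norm_mul, norm_mul, RCLike.norm_conj]
    calc _ ≤ ‖ft2 R p.1 p.2‖ * ((L * d * |p.1| ^ α) * (L * d * |p.2| ^ α)) := by gcongr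
      _ = _ := by ring
  rw [integral_const_mul] at hb
  rw [Complex.norm_real, Real.norm_eq_abs, abs_of_nonneg (by positivity)]
  refine (mul_le_mul_of_nonneg_left hb (by positivity)).trans (le_of_eq ?_)
  rw [hdd]
  field_simp
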